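/- Let (ρ,u,∇π) be a smooth solution of the odd-viscosity system (OV) on [0,T]×ℝ² with ρ ≥ ρ_* > 0. Then the vorticity ω := ∂₁u₂ − ∂₂u₁ satisfies ∂_t ω + u·∇ω + ∇^⊥(1/ρ)·∇π + ℬ(∇u, ∇² log ρ) = 0, and equivalently, using the cancellation ∇^⊥(1/ρ)·∇ρ = 0, the transport equation ∂_t ω + (u − ∇^⊥ log ρ)·∇ω = −∇^⊥(1/ρ)·∇(π − ρω) − ℬ(∇u, ∇² log ρ), where the vector field u − ∇^⊥ log ρ is divergence-free. -/

import Mathlib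

/-!
Common framework: the plane `ℝ²`, classical differential operators, Fourier-side Sobolev
norms, Littlewood–Paley blocks, Chemin–Lerner norms, and the fluid systems of the paper
"Some remarks on the one-dimensional ... odd viscosity" formalisation.
-/

noncomputable section

open MeasureTheory Filter Set
open scoped ENNReal FourierTransform

/-- The plane `ℝ²`, as a Euclidean space. -/
abbrev V2 : Type := EuclideanSpace ℝ (Fin 2)

/-- Partial derivative in the `i`-th coordinate direction. -/
def pd (i : Fin 2) (f : V2 → ℝ) (x : V2) : ℝ :=
  fderiv ℝ f x (EuclideanSpace.single i 1)

/-- Partial derivative, for complex-valued functions. -/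
def pdC (i : Fin 2) (f : V2 → ℂ) (x : V2) : ℂ :=
  fderiv ℝ f x (EuclideanSpace.single i 1)

/-- Laplacian. -/
def lap (f : V2 → ℝ) (x : V2) : ℝ := pd 0 (pd 0 f) x + pd 1 (pd 1 f) x

/-- Divergence of a planar vector field. -/
def divg (u : V2 → V2) (x : V2) : ℝ :=
  pd 0 (fun y => u y 0) x + pd 1 (fun y => u y 1) x

/-- `j`-th component of the rotated field `u^⊥ = (-u₂, u₁)`. -/
def perpC (u : V2 → V2) (j : Fin 2) : V2 → ℝ :=
  if j = 0 then fun x => -(u x 1) else fun x => u x 0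

/-- Vorticity `∇^⊥ ⋅ u = ∂₁ u₂ - ∂₂ u₁`. -/
def curl2 (u : V2 → V2) (x : V2) : ℝ :=
  pd 0 (fun y => u y 1) x - pd 1 (fun y => u y 0) x

/-- Componentwise Laplacian of a vector field. -/
def lapV (u : V2 → V2) (x : V2) : V2 := WithLp.toLp 2 fun j => lap (fun y => u y j) x

/-- The bilinear operator `ℬ(∇v, ∇²α)`. -/
def Bop (v : V2 → V2) (α : V2 → ℝ) (x : V2) : ℝ :=
  pd 0 (pd 1 α) x * (pd 0 (fun y => v y 1) x + pd 1 (fun y => v y 0) x) +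
    pd 0 (fun y => v y 0) x * (pd 0 (pd 0 α) x - pd 1 (pd 1 α) x)

/-- A real function, seen as a complex-valued one. -/
def fC (f : V2 → ℝ) : V2 → ℂ := fun x => (f x : ℂ)

/-- The Sobolev `H^σ(ℝ²)` norm, defined via the Fourier transform. -/
def hNorm (σ : ℝ) (f : V2 → ℝ) : ℝ :=
  (∫ ξ : V2, (1 + ‖ξ‖ ^ 2) ^ σ * ‖𝓕 (fC f) ξ‖ ^ 2) ^ (1 / 2 : ℝ)

/-- Membership in the Sobolev space `H^σ(ℝ²)`. -/
def MemH (σ : ℝ) (f : V2 → ℝ) : Prop :=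
  MemLp f 2 (volume : Measure V2) ∧
    Integrable (fun ξ : V2 => (1 + ‖ξ‖ ^ 2) ^ σ * ‖𝓕 (fC f) ξ‖ ^ 2)
      (volume : Measure V2)

def hNormV (σ : ℝ) (u : V2 → V2) : ℝ :=
  hNorm σ (fun x => u x 0) + hNorm σ (fun x => u x 1)

def MemHV (σ : ℝ) (u : V2 → V2) : Prop :=
  MemH σ (fun x => u x 0) ∧ MemH σ (fun x => u x 1)

/-- `H^σ` norm of the gradient of a scalar function. -/
def hNormGrad (σ : ℝ) (f : V2 → ℝ) : ℝ := hNorm σ (pd 0 f) + hNorm σ (pd 1 f)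

def MemHGrad (σ : ℝ) (f : V2 → ℝ) : Prop := MemH σ (pd 0 f) ∧ MemH σ (pd 1 f)

/-- `L^p` norm of a scalar function (`p = ∞` allowed). -/
def lpN (p : ℝ≥0∞) (f : V2 → ℝ) : ℝ := (eLpNorm f p (volume : Measure V2)).toReal

def lpNV (p : ℝ≥0∞) (u : V2 → V2) : ℝ := (eLpNorm u p (volume : Measure V2)).toReal

/-- `L^∞` norm of the (full) gradient of a scalar function. -/
def gradSup (f : V2 → ℝ) : ℝ :=
  (eLpNorm (fun x => ‖fderiv ℝ f x‖) ⊤ (volume : Measure V2)).toReal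

def gradSupV (u : V2 → V2) : ℝ :=
  (eLpNorm (fun x => ‖fderiv ℝ u x‖) ⊤ (volume : Measure V2)).toReal

/-- `L^∞` norm of the Hessian of a scalar function. -/
def hessSup (f : V2 → ℝ) : ℝ :=
  (eLpNorm (fun x => ‖fderiv ℝ (fderiv ℝ f) x‖) ⊤ (volume : Measure V2)).toReal

/-- Continuity in time with values in `H^σ`, on the time set `S`. -/
def ContH (σ : ℝ) (S : Set ℝ) (f : ℝ → V2 → ℝ) : Prop :=
  (∀ t ∈ S, MemH σ (f t)) ∧
    ∀ t₀ ∈ S, Tendsto (fun t => hNorm σ (fun x => f t x - f t₀ x))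
      (nhdsWithin t₀ S) (nhds 0)

def ContHV (σ : ℝ) (S : Set ℝ) (u : ℝ → V2 → V2) : Prop :=
  ContH σ S (fun t x => u t x 0) ∧ ContH σ S (fun t x => u t x 1)

def ContHGrad (σ : ℝ) (S : Set ℝ) (π : ℝ → V2 → ℝ) : Prop :=
  ContH σ S (fun t => pd 0 (π t)) ∧ ContH σ S (fun t => pd 1 (π t))

/-- Continuity in time with values in `L²` (scalar case). -/
def ContL2 (S : Set ℝ) (f : ℝ → V2 → ℝ) : Prop :=
  (∀ t ∈ S, MemLp (f t) 2 (volume : Measure V2)) ∧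
    ∀ t₀ ∈ S, Tendsto (fun t => eLpNorm (fun x => f t x - f t₀ x) 2 (volume : Measure V2))
      (nhdsWithin t₀ S) (nhds 0)

/-- Continuity in time with values in `L²` (vector case). -/
def ContL2V (S : Set ℝ) (u : ℝ → V2 → V2) : Prop :=
  (∀ t ∈ S, MemLp (u t) 2 (volume : Measure V2)) ∧
    ∀ t₀ ∈ S, Tendsto (fun t => eLpNorm (fun x => u t x - u t₀ x) 2 (volume : Measure V2))
      (nhdsWithin t₀ S) (nhds 0)

/-- `∇·(ρ u ⊗ u)`, `j`-th component. -/
def momTensorDiv (ρ : V2 → ℝ) (u : V2 → V2) (j : Fin 2) (x : V2) : ℝ :=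
  pd 0 (fun y => ρ y * u y 0 * u y j) x + pd 1 (fun y => ρ y * u y 1 * u y j) x

/-- `∇·(ρ ∇u^⊥)`, `j`-th component. -/
def oddTermDiv (ρ : V2 → ℝ) (u : V2 → V2) (j : Fin 2) (x : V2) : ℝ :=
  pd 0 (fun y => ρ y * pd 0 (perpC u j) y) x + pd 1 (fun y => ρ y * pd 1 (perpC u j) y) x

/-- The odd-viscosity system (OV) on the time set `S`. -/
structure IsOVSolution (S : Set ℝ) (ρ : ℝ → V2 → ℝ) (u : ℝ → V2 → V2)
    (π : ℝ → V2 → ℝ) : Prop where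
  mass : ∀ t ∈ S, ∀ x : V2,
    deriv (fun s => ρ s x) t +
      (pd 0 (fun y => ρ t y * u t y 0) x + pd 1 (fun y => ρ t y * u t y 1) x) = 0
  momentum : ∀ t ∈ S, ∀ x : V2, ∀ j : Fin 2,
    deriv (fun s => ρ s x * u s x j) t + momTensorDiv (ρ t) (u t) j x +
      pd j (π t) x + oddTermDiv (ρ t) (u t) j x = 0
  incomp : ∀ t ∈ S, ∀ x : V2, divg (u t) x = 0

/-- The regularised odd-viscosity system, with hyperviscosity `+ ε Δ² u`. -/
structure IsOVepsSolution (ε : ℝ) (S : Set ℝ) (ρ : ℝ → V2 → ℝ) (u : ℝ → V2 → V2)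
    (π : ℝ → V2 → ℝ) : Prop where
  mass : ∀ t ∈ S, ∀ x : V2,
    deriv (fun s => ρ s x) t +
      (pd 0 (fun y => ρ t y * u t y 0) x + pd 1 (fun y => ρ t y * u t y 1) x) = 0
  momentum : ∀ t ∈ S, ∀ x : V2, ∀ j : Fin 2,
    deriv (fun s => ρ s x * u s x j) t + momTensorDiv (ρ t) (u t) j x +
      pd j (π t) x + oddTermDiv (ρ t) (u t) j x +
      ε * lap (lap fun y => u t y j) x = 0
  incomp : ∀ t ∈ S, ∀ x : V2, divg (u t) x = 0

/-- Space-time smoothness of a scalar function. -/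
def SmoothFn (f : ℝ → V2 → ℝ) : Prop := ContDiff ℝ (⊤ : ℕ∞) fun p : ℝ × V2 => f p.1 p.2

def SmoothFnV (u : ℝ → V2 → V2) : Prop := ContDiff ℝ (⊤ : ℕ∞) fun p : ℝ × V2 => u p.1 p.2

/-- `η = ∇^⊥ ⋅ (ρ u)`. -/
def etaFun (ρ : V2 → ℝ) (u : V2 → V2) (x : V2) : ℝ :=
  curl2 (fun y => WithLp.toLp 2 fun i => ρ y * u y i) x

/-- The good unknown `θ = η - Δρ`. -/
def thetaFun (ρ : V2 → ℝ) (u : V2 → V2) (x : V2) : ℝ := etaFun ρ u x - lap ρ x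

/-- The energy `E(t) = ‖ρ(t) - 1‖_{H^{s+1}} + ‖u(t)‖_{H^s}`. -/
def Een (s : ℝ) (ρ : ℝ → V2 → ℝ) (u : ℝ → V2 → V2) (t : ℝ) : ℝ :=
  hNorm (s + 1) (fun x => ρ t x - 1) + hNormV s (u t)

/-- The energy `F(t)` built on the good unknowns. -/
def Fen (s : ℝ) (ρ : ℝ → V2 → ℝ) (u : ℝ → V2 → V2) (t : ℝ) : ℝ :=
  lpN 2 (fun x => ρ t x - 1) + lpNV 2 (u t) +
    hNorm (s - 1) (thetaFun (ρ t) (u t)) + hNorm (s - 1) (curl2 (u t))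

/-- The time interval `[0, T]`, where `T = +∞` is allowed. -/
def timeSet (T : ℝ≥0∞) : Set ℝ := {t : ℝ | 0 ≤ t ∧ ENNReal.ofReal t ≤ T}

/-- The Bessel-type Fourier multiplier `Λ^σ = (Id - Δ)^{σ/2}`. -/
def Lam (σ : ℝ) (f : V2 → ℂ) : V2 → ℂ :=
  𝓕⁻ fun ξ => (((1 + ‖ξ‖ ^ 2) ^ (σ / 2) : ℝ) : ℂ) * 𝓕 f ξ

/-- Transport term `(v⋅∇)f`. -/
def adv (v : V2 → V2) (f : V2 → ℝ) (x : V2) : ℝ :=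
  v x 0 * pd 0 f x + v x 1 * pd 1 f x

/-- Transport term, complex-valued functions. -/
def advC (ζ : V2 → V2) (g : V2 → ℂ) (x : V2) : ℂ :=
  (ζ x 0 : ℂ) * pdC 0 g x + (ζ x 1 : ℂ) * pdC 1 g x

/-! ### Littlewood–Paley theory and Chemin–Lerner spaces -/

/-- A smooth radial cut-off, equal to `1` for `‖ξ‖ ≤ 1` and to `0` for `‖ξ‖ ≥ 2`. -/
def lpChi (ξ : V2) : ℝ := 1 - Real.smoothTransition (‖ξ‖ - 1)

/-- Littlewood–Paley symbols: index `0` is the low-frequency block `Δ₋₁`,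
index `k + 1` is the dyadic block `Δ_k`. -/
def lpSymb (k : ℕ) (ξ : V2) : ℝ :=
  if k = 0 then lpChi ξ
  else lpChi (((2 : ℝ) ^ (k - 1))⁻¹ • ξ) - lpChi (((2 : ℝ) ^ (k - 1))⁻¹ • ((2 : ℝ) • ξ))

/-- Littlewood–Paley block. -/
def lpBlock (k : ℕ) (f : V2 → ℂ) : V2 → ℂ :=
  𝓕⁻ fun ξ => (lpSymb k ξ : ℂ) * 𝓕 f ξ

/-- `‖Δ_j u‖_{L^q_T(L²)}` (block index `k` corresponds to `j = k - 1`). -/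
def blockNormT (k : ℕ) (q : ℝ≥0∞) (T : ℝ) (f : ℝ → V2 → ℂ) : ℝ≥0∞ :=
  eLpNorm (fun t => (eLpNorm (lpBlock k (f t)) 2 (volume : Measure V2)).toReal) q
    ((volume : Measure ℝ).restrict (Icc 0 T))

/-- Dyadic weight `2^{jσ}` for the block index `k` (recall `j = k - 1`). -/
def lpWeight (σ : ℝ) (k : ℕ) : ℝ≥0∞ :=
  ENNReal.ofReal ((2 : ℝ) ^ (((k : ℝ) - 1) * σ))

/-- The Chemin–Lerner norm `‖·‖_{L̃^q_T(H^σ)}`, complex scalar version. -/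
def clNormC (σ : ℝ) (q : ℝ≥0∞) (T : ℝ) (f : ℝ → V2 → ℂ) : ℝ≥0∞ :=
  (∑' k : ℕ, (lpWeight σ k * blockNormT k q T f) ^ 2) ^ (1 / 2 : ℝ)

def clNorm (σ : ℝ) (q : ℝ≥0∞) (T : ℝ) (f : ℝ → V2 → ℝ) : ℝ≥0∞ :=
  clNormC σ q T fun t x => (f t x : ℂ)

def clNormV (σ : ℝ) (q : ℝ≥0∞) (T : ℝ) (u : ℝ → V2 → V2) : ℝ≥0∞ :=
  clNorm σ q T (fun t x => u t x 0) + clNorm σ q T (fun t x => u t x 1)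

def clNormGrad (σ : ℝ) (q : ℝ≥0∞) (T : ℝ) (π : ℝ → V2 → ℝ) : ℝ≥0∞ :=
  clNorm σ q T (fun t => pd 0 (π t)) + clNorm σ q T (fun t => pd 1 (π t))

/-- Membership in `C̃_T(H^σ) = L̃^∞_T(H^σ) ∩ C([0,T];H^σ)` for a vector field. -/
def MemTildeC (σ : ℝ) (T : ℝ) (u : ℝ → V2 → V2) : Prop :=
  clNormV σ ⊤ T u < ⊤ ∧ ContHV σ (Icc 0 T) u

/-- The Besov `B¹_{2,∞}` norm. -/
def b21inf (f : V2 → ℝ) : ℝ≥0∞ :=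
  ⨆ k : ℕ, lpWeight 1 k * eLpNorm (lpBlock k (fC f)) 2 (volume : Measure V2)

/-- `‖∇v‖_{B¹_{2,∞} ∩ L^∞}`, summed over the entries of the Jacobian. -/
def jacBnorm (v : V2 → V2) : ℝ≥0∞ :=
  (∑ i : Fin 2, ∑ j : Fin 2, b21inf (pd i fun y => v y j)) +
    eLpNorm (fun x => ‖fderiv ℝ v x‖) ⊤ (volume : Measure V2)

/-- `‖∇v‖_{H^σ}`, summed over the entries of the Jacobian (extended-real valued). -/
def jacHnorm (σ : ℝ) (v : V2 → V2) : ℝ≥0∞ :=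
  ∑ i : Fin 2, ∑ j : Fin 2, ENNReal.ofReal (hNorm σ (pd i fun y => v y j))

/-- The quantity `V(T) = ∫₀^T V'(t) dt` of transport theory. -/
def Vquant (σ : ℝ) (T : ℝ) (v : ℝ → V2 → V2) : ℝ :=
  if σ < 2 then (∫⁻ t in Icc 0 T, jacBnorm (v t)).toReal
  else (∫⁻ t in Icc 0 T, jacHnorm (σ - 1) (v t)).toReal

/-- The hypothesis `∇v ∈ L¹([0,T]; B¹_{2,∞} ∩ L^∞)` (if `σ < 2`), resp.
`∇v ∈ L¹([0,T]; H^{σ-1})` (if `σ > 2`). -/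
def VCond (σ : ℝ) (T : ℝ) (v : ℝ → V2 → V2) : Prop :=
  (σ < 2 → (∫⁻ t in Icc 0 T, jacBnorm (v t)) < ⊤) ∧
    (2 < σ →
      (∀ t ∈ Icc 0 T, ∀ i j : Fin 2, MemH (σ - 1) (pd i fun y => v t y j)) ∧
        (∫⁻ t in Icc 0 T, jacHnorm (σ - 1) (v t)) < ⊤)

/-- `‖u‖_{L¹_T(L²)}`. -/
def l1L2V (T : ℝ) (u : ℝ → V2 → V2) : ℝ≥0∞ :=
  ∫⁻ t in Icc 0 T, eLpNorm (u t) 2 (volume : Measure V2)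

/-! ### Stokes-type systems -/

/-- The hyperviscous Stokes system with variable-coefficient odd term:
`∂ₜu + (v⋅∇)u + b∇Π + ν b Δ²u + b ∇·(h ∇u^⊥) = g`, with `h = b⁻¹`,
`∇·u = 0`, `u|₀ = u₀`. -/
def IsStokesVarSolution (ν T : ℝ) (b : ℝ → V2 → ℝ) (v : ℝ → V2 → V2)
    (g : ℝ → V2 → V2) (u₀ : V2 → V2) (u : ℝ → V2 → V2) (P : ℝ → V2 → ℝ) : Prop :=
  (∀ t ∈ Icc 0 T, ∀ x : V2, ∀ j : Fin 2,
    deriv (fun s => u s x j) t + adv (v t) (fun y => u t y j) x +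
      b t x * pd j (P t) x + ν * b t x * lap (lap fun y => u t y j) x +
      b t x *
        (pd 0 (fun y => (b t y)⁻¹ * pd 0 (perpC (u t) j) y) x +
          pd 1 (fun y => (b t y)⁻¹ * pd 1 (perpC (u t) j) y) x) = g t x j) ∧
    (∀ t ∈ Icc 0 T, ∀ x : V2, divg (u t) x = 0) ∧ ∀ x : V2, u 0 x = u₀ x

/-- The hyperviscous Stokes system with constant-coefficient odd term:
`∂ₜu + (v⋅∇)u + b∇Π + ν b Δ²u + Δu^⊥ = f`, `∇·u = 0`, `u|₀ = u₀`. -/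
def IsStokesConstSolution (ν T : ℝ) (b : ℝ → V2 → ℝ) (v : ℝ → V2 → V2)
    (f : ℝ → V2 → V2) (u₀ : V2 → V2) (u : ℝ → V2 → V2) (P : ℝ → V2 → ℝ) : Prop :=
  (∀ t ∈ Icc 0 T, ∀ x : V2, ∀ j : Fin 2,
    deriv (fun s => u s x j) t + adv (v t) (fun y => u t y j) x +
      b t x * pd j (P t) x + ν * b t x * lap (lap fun y => u t y j) x +
      lap (perpC (u t) j) x = f t x j) ∧
    (∀ t ∈ Icc 0 T, ∀ x : V2, divg (u t) x = 0) ∧ ∀ x : V2, u 0 x = u₀ x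

/-- The system `h(∂ₜu + (v⋅∇)u) + ∇Π + νΔ²u + ∇·(h∇u^⊥) = h g`, `∇·u = 0`,
`u|₀ = u₀`, on the time set `S`. -/
def IsStokesHSolutionOn (ν : ℝ) (S : Set ℝ) (h : ℝ → V2 → ℝ) (v : ℝ → V2 → V2)
    (g : ℝ → V2 → V2) (u₀ : V2 → V2) (u : ℝ → V2 → V2) (P : ℝ → V2 → ℝ) : Prop :=
  (∀ t ∈ S, ∀ x : V2, ∀ j : Fin 2,
    h t x * (deriv (fun s => u s x j) t + adv (v t) (fun y => u t y j) x) +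
      pd j (P t) x + ν * lap (lap fun y => u t y j) x +
      (pd 0 (fun y => h t y * pd 0 (perpC (u t) j) y) x +
        pd 1 (fun y => h t y * pd 1 (perpC (u t) j) y) x) = h t x * g t x j) ∧
    (∀ t ∈ S, ∀ x : V2, divg (u t) x = 0) ∧ ∀ x : V2, u 0 x = u₀ x

/-!
Dividing the momentum equation by `ρ` and using conservation of mass gives
`∂ₜu + (u·∇)u + ρ⁻¹∇π + Δu^⊥ + (∇ log ρ·∇)u^⊥ = 0`, and the vorticity equation is its curl.
The top-order odd term drops out because `curl Δu^⊥ = Δ div u = 0`. In the curl of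
`(∇ log ρ·∇)u^⊥` the second derivatives of `u` again combine into `∇ div u = 0`, which leaves
`ℬ(∇u, ∇² log ρ)`. The transport form follows from `ρ∇^⊥(1/ρ) = -∇^⊥ log ρ`.
-/

section PartialMaps

variable {𝕜 E F : Type*} [NontriviallyNormedField 𝕜] [NormedAddCommGroup E] [NormedSpace 𝕜 E]
  [NormedAddCommGroup F] [NormedSpace 𝕜 F]

theorem hasDerivAt_uncurry_left {f : 𝕜 → E → F} {t : 𝕜} {x : E}
    (hf : DifferentiableAt 𝕜 (fun p : 𝕜 × E => f p.1 p.2) (t, x)) :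
    HasDerivAt (fun s => f s x) (fderiv 𝕜 (fun p : 𝕜 × E => f p.1 p.2) (t, x) (1, 0)) t := by
  have hline : HasDerivAt (fun s : 𝕜 => (s, x)) (1, 0) t :=
    (hasDerivAt_id t).prodMk (hasDerivAt_const t x)
  exact hf.hasFDerivAt.comp_hasDerivAt t hline

theorem fderiv_uncurry_right {f : 𝕜 → E → F} {t : 𝕜} {x : E}
    (hf : DifferentiableAt 𝕜 (fun p : 𝕜 × E => f p.1 p.2) (t, x)) (v : E) :
    fderiv 𝕜 (f t) x v = fderiv 𝕜 (fun p : 𝕜 × E => f p.1 p.2) (t, x) (0, v) := by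
  have hslice : HasFDerivAt (f t) _ x := hf.hasFDerivAt.comp x (hasFDerivAt_prodMk_right t x)
  simp [hslice.fderiv]

end PartialMaps

section SymmetryOfDerivatives

variable {𝕜 E F : Type*} [RCLike 𝕜] [NormedAddCommGroup E] [NormedSpace 𝕜 E]
  [NormedAddCommGroup F] [NormedSpace 𝕜 F]

theorem fderiv_fderiv_apply_comm {f : E → F} {x : E} (hf : ContDiffAt 𝕜 2 f x) (v w : E) :
    fderiv 𝕜 (fun y => fderiv 𝕜 f y v) x w = fderiv 𝕜 (fun y => fderiv 𝕜 f y w) x v := by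
  have hdiff : DifferentiableAt 𝕜 (fderiv 𝕜 f) x :=
    (hf.fderiv_right one_add_one_eq_two.le).differentiableAt one_ne_zero
  have happly (a b : E) :
      fderiv 𝕜 (fun y => fderiv 𝕜 f y a) x b = fderiv 𝕜 (fderiv 𝕜 f) x b a := by
    simp [fderiv_clm_apply hdiff (differentiableAt_const a)]
  rw [happly, happly]
  exact hf.isSymmSndFDerivAt (by simp) w v

theorem hasDerivAt_fderiv_apply {f : 𝕜 → E → F}
    (hf : ContDiff 𝕜 2 fun p : 𝕜 × E => f p.1 p.2) (t : 𝕜) (x v : E) :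
    HasDerivAt (fun s => fderiv 𝕜 (f s) x v)
      (fderiv 𝕜 (fun y => deriv (fun s => f s y) t) x v) t := by
  have hdiff : Differentiable 𝕜 fun p : 𝕜 × E => f p.1 p.2 := hf.differentiable two_ne_zero
  have hdir (w : 𝕜 × E) :
      Differentiable 𝕜 fun p : 𝕜 × E => fderiv 𝕜 (fun q : 𝕜 × E => f q.1 q.2) p w :=
    ((hf.fderiv_right one_add_one_eq_two.le).clm_apply contDiff_const).differentiable
      one_ne_zero
  simp only [fun s => fderiv_uncurry_right (hdiff (s, x)) v,
    fun y => (hasDerivAt_uncurry_left (hdiff (t, y))).deriv]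
  rw [fderiv_uncurry_right (f := fun s y => fderiv 𝕜 _ (s, y) (1, 0)) (hdir (1, 0) (t, x)),
    fderiv_fderiv_apply_comm hf.contDiffAt]
  exact hasDerivAt_uncurry_left (f := fun s y => fderiv 𝕜 _ (s, y) (0, v)) (hdir (0, v) (t, x))

end SymmetryOfDerivatives

theorem deriv_euclideanSpace_apply {𝕜 ι : Type*} [RCLike 𝕜] [Finite ι]
    {f : 𝕜 → EuclideanSpace 𝕜 ι} {t : 𝕜} (hf : DifferentiableAt 𝕜 f t) (i : ι) :
    deriv f t i = deriv (fun s => f s i) t :=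
  have := Fintype.ofFinite ι
  ((EuclideanSpace.proj (𝕜 := 𝕜) i).hasFDerivAt.comp_hasDerivAt t hf.hasDerivAt).deriv.symm

section PartialDerivatives

variable {f g : V2 → ℝ} {x : V2}

theorem pd_const (c : ℝ) (i : Fin 2) : pd i (fun _ => c) = fun _ => 0 := by
  ext
  simp [pd]

theorem pd_add (hf : DifferentiableAt ℝ f x) (hg : DifferentiableAt ℝ g x) (i : Fin 2) :
    pd i (fun y => f y + g y) x = pd i f x + pd i g x := by
  simp [pd, fderiv_fun_add hf hg]

theorem pd_neg (f : V2 → ℝ) (i : Fin 2) (x : V2) : pd i (fun y => -f y) x = -pd i f x := by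
  simp [pd, fderiv_fun_neg]

theorem pd_sub (hf : DifferentiableAt ℝ f x) (hg : DifferentiableAt ℝ g x) (i : Fin 2) :
    pd i (fun y => f y - g y) x = pd i f x - pd i g x := by
  simp [pd, fderiv_fun_sub hf hg]

theorem pd_mul (hf : DifferentiableAt ℝ f x) (hg : DifferentiableAt ℝ g x) (i : Fin 2) :
    pd i (fun y => f y * g y) x = f x * pd i g x + g x * pd i f x := by
  simp [pd, fderiv_fun_mul hf hg]

theorem pd_comp {φ : ℝ → ℝ} (hφ : DifferentiableAt ℝ φ (f x)) (hf : DifferentiableAt ℝ f x)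
    (i : Fin 2) : pd i (fun y => φ (f y)) x = deriv φ (f x) * pd i f x := by
  have hcomp : HasFDerivAt (fun y => φ (f y)) _ x :=
    hφ.hasDerivAt.comp_hasFDerivAt x hf.hasFDerivAt
  simp [pd, hcomp.fderiv]

theorem contDiff_pd {m n : WithTop ℕ∞} (hf : ContDiff ℝ n f) (hmn : m + 1 ≤ n) (i : Fin 2) :
    ContDiff ℝ m (pd i f) :=
  (hf.fderiv_right hmn).clm_apply contDiff_const

theorem differentiable_pd (hf : ContDiff ℝ 2 f) (i : Fin 2) : Differentiable ℝ (pd i f) :=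
  (contDiff_pd hf one_add_one_eq_two.le i).differentiable one_ne_zero

theorem pd_comm (hf : ContDiffAt ℝ 2 f x) (i j : Fin 2) : pd i (pd j f) x = pd j (pd i f) x :=
  fderiv_fderiv_apply_comm hf _ _

theorem lap_sub (hf : ContDiff ℝ 2 f) (hg : ContDiff ℝ 2 g) (x : V2) :
    lap (fun y => f y - g y) x = lap f x - lap g x := by
  have hpd (i : Fin 2) : pd i (fun y => f y - g y) = fun y => pd i f y - pd i g y :=
    funext fun y =>
      pd_sub (hf.differentiable two_ne_zero y) (hg.differentiable two_ne_zero y) i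
  simp only [lap, hpd, pd_sub (differentiable_pd hf _ x) (differentiable_pd hg _ x)]
  ring

theorem pd_lap (hf : ContDiff ℝ 3 f) (i : Fin 2) (x : V2) : pd i (lap f) x = lap (pd i f) x := by
  have hpd (k : Fin 2) : ContDiff ℝ 2 (pd k f) := contDiff_pd hf two_add_one_eq_three.le k
  have hthird (k : Fin 2) : pd i (pd k (pd k f)) x = pd k (pd k (pd i f)) x := by
    have hinner : pd i (pd k f) = pd k (pd i f) :=
      funext fun y => pd_comm (hf.of_le (by norm_num)).contDiffAt i k
    rw [pd_comm (hpd k).contDiffAt i k, hinner]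
  change pd i (fun y => pd 0 (pd 0 f) y + pd 1 (pd 1 f) y) x = _
  rw [pd_add (differentiable_pd (hpd 0) 0 x) (differentiable_pd (hpd 1) 1 x), hthird, hthird, lap]

end PartialDerivatives

section VectorCalculus

/-- The gradient `∇f` as a vector field on the plane. -/
def grad (f : V2 → ℝ) (x : V2) : V2 := WithLp.toLp 2 fun i => pd i f x

/-- The rotated field `v^⊥ = (-v₂, v₁)`, whose components are `perpC v`; in particular
`perp (grad f)` is `∇^⊥f`. -/
def perp (v : V2 → V2) (x : V2) : V2 := WithLp.toLp 2 fun j => perpC v j x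

/-- The componentwise directional derivative `(w·∇)v` of a vector field. -/
def advV (w v : V2 → V2) (x : V2) : V2 := WithLp.toLp 2 fun j => adv w (fun y => v y j) x

/-- The odd viscous force per unit mass `Δv^⊥ + (∇α·∇)v^⊥`; for `α = log ρ` it is
`ρ⁻¹ ∇·(ρ ∇v^⊥)`. -/
def oddForce (α : V2 → ℝ) (v : V2 → V2) (x : V2) : V2 :=
  lapV (perp v) x + advV (grad α) (perp v) x

variable {f g α : V2 → ℝ} {u v w : V2 → V2} {x : V2}

theorem contDiff_grad (hf : ContDiff ℝ 2 f) : ContDiff ℝ 1 (grad f) :=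
  contDiff_euclidean.2 (contDiff_pd hf one_add_one_eq_two.le)

theorem differentiable_grad (hf : ContDiff ℝ 2 f) : Differentiable ℝ (grad f) :=
  (contDiff_grad hf).differentiable one_ne_zero

theorem contDiff_perp {n : WithTop ℕ∞} (hv : ContDiff ℝ n v) : ContDiff ℝ n (perp v) := by
  refine contDiff_euclidean.2 fun j => ?_
  fin_cases j
  · exact (contDiff_euclidean.1 hv 1).neg
  · exact contDiff_euclidean.1 hv 0

theorem differentiable_advV (hw : ContDiff ℝ 1 w) (hv : ContDiff ℝ 2 v) :
    Differentiable ℝ (advV w v) := by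
  have hw' := contDiff_euclidean.1 hw
  exact differentiable_euclidean.2 fun j =>
    (((hw' 0).differentiable one_ne_zero).mul
      (differentiable_pd (contDiff_euclidean.1 hv j) 0)).add
    (((hw' 1).differentiable one_ne_zero).mul
      (differentiable_pd (contDiff_euclidean.1 hv j) 1))

theorem differentiable_lapV (hv : ContDiff ℝ 3 v) : Differentiable ℝ (lapV v) := by
  have hpd (i j : Fin 2) : ContDiff ℝ 2 (pd i fun y => v y j) :=
    contDiff_pd (contDiff_euclidean.1 hv j) two_add_one_eq_three.le i
  exact differentiable_euclidean.2 fun j =>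
    (differentiable_pd (hpd 0 j) 0).add (differentiable_pd (hpd 1 j) 1)

theorem differentiable_curl2 (hv : ContDiff ℝ 2 v) : Differentiable ℝ (curl2 v) :=
  (differentiable_pd (contDiff_euclidean.1 hv 1) 0).sub
    (differentiable_pd (contDiff_euclidean.1 hv 0) 1)

theorem adv_sub_right (hf : DifferentiableAt ℝ f x) (hg : DifferentiableAt ℝ g x) (w : V2 → V2) :
    adv w (fun y => f y - g y) x = adv w f x - adv w g x := by
  simp only [adv, pd_sub hf hg]
  ring

theorem adv_mul_right (hf : DifferentiableAt ℝ f x) (hg : DifferentiableAt ℝ g x) (w : V2 → V2) :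
    adv w (fun y => f y * g y) x = f x * adv w g x + g x * adv w f x := by
  simp only [adv, pd_mul hf hg]
  ring

theorem adv_sub_left (v w : V2 → V2) (f : V2 → ℝ) (x : V2) :
    adv (fun y => v y - w y) f x = adv v f x - adv w f x := by
  simp only [adv, PiLp.sub_apply]
  ring

theorem adv_grad_comp {φ : ℝ → ℝ} (hφ : DifferentiableAt ℝ φ (f x))
    (hf : DifferentiableAt ℝ f x) (g : V2 → ℝ) :
    adv (grad fun y => φ (f y)) g x = deriv φ (f x) * adv (grad f) g x := by
  simp only [adv, grad, pd_comp hφ hf]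
  ring

theorem adv_perp_grad (f g : V2 → ℝ) (x : V2) :
    adv (perp (grad f)) g x = -pd 1 f x * pd 0 g x + pd 0 f x * pd 1 g x := rfl

theorem adv_perp_grad_comp {φ : ℝ → ℝ} (hφ : DifferentiableAt ℝ φ (f x))
    (hf : DifferentiableAt ℝ f x) (g : V2 → ℝ) :
    adv (perp (grad fun y => φ (f y))) g x = deriv φ (f x) * adv (perp (grad f)) g x := by
  simp only [adv_perp_grad, pd_comp hφ hf]
  ring

theorem adv_perp_grad_self (f : V2 → ℝ) (x : V2) : adv (perp (grad f)) f x = 0 := by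
  rw [adv_perp_grad]
  ring

theorem adv_perp_grad_inv (hf : DifferentiableAt ℝ f x) (hx : f x ≠ 0) (g : V2 → ℝ) :
    adv (perp (grad fun y => (f y)⁻¹)) g x = -(f x ^ 2)⁻¹ * adv (perp (grad f)) g x := by
  rw [adv_perp_grad_comp (φ := fun z => z⁻¹) (differentiableAt_inv hx) hf, deriv_inv]

theorem adv_perp_grad_inv_self (hf : DifferentiableAt ℝ f x) (hx : f x ≠ 0) :
    adv (perp (grad fun y => (f y)⁻¹)) f x = 0 := by
  rw [adv_perp_grad_inv hf hx, adv_perp_grad_self, mul_zero]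

theorem mul_adv_perp_grad_inv (hf : DifferentiableAt ℝ f x) (hx : f x ≠ 0) (g : V2 → ℝ) :
    f x * adv (perp (grad fun y => (f y)⁻¹)) g x =
      -adv (perp (grad fun y => Real.log (f y))) g x := by
  rw [adv_perp_grad_inv hf hx, adv_perp_grad_comp (Real.differentiableAt_log hx) hf,
    Real.deriv_log]
  field_simp

theorem adv_perp_grad_inv_sub_mul {p ω : V2 → ℝ} (hf : DifferentiableAt ℝ f x)
    (hp : DifferentiableAt ℝ p x) (hω : DifferentiableAt ℝ ω x) (hx : f x ≠ 0) :
    adv (perp (grad fun y => (f y)⁻¹)) (fun y => p y - f y * ω y) x =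
      adv (perp (grad fun y => (f y)⁻¹)) p x +
        adv (perp (grad fun y => Real.log (f y))) ω x := by
  rw [adv_sub_right hp (hf.fun_mul hω), adv_mul_right hf hω, adv_perp_grad_inv_self hf hx,
    mul_adv_perp_grad_inv hf hx]
  ring

theorem sub_perp_grad_eq (v : V2 → V2) (f : V2 → ℝ) :
    (fun y => v y - perp (grad f) y) = fun y => WithLp.toLp 2 fun i =>
      if i = 0 then v y 0 + pd 1 f y else v y 1 - pd 0 f y := by
  ext y i
  fin_cases i
  · exact sub_neg_eq_add _ _
  · rfl

theorem divg_sub (hv : DifferentiableAt ℝ v x) (hw : DifferentiableAt ℝ w x) :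
    divg (fun y => v y - w y) x = divg v x - divg w x := by
  have hv' := differentiableAt_euclidean.1 hv
  have hw' := differentiableAt_euclidean.1 hw
  simp only [divg, PiLp.sub_apply, pd_sub (hv' _) (hw' _)]
  ring

theorem divg_perp_grad (hf : ContDiffAt ℝ 2 f x) : divg (perp (grad f)) x = 0 := by
  change pd 0 (fun y => -pd 1 f y) x + pd 1 (pd 0 f) x = 0
  rw [pd_neg, pd_comm hf 0 1, neg_add_cancel]

theorem curl2_neg (v : V2 → V2) (x : V2) : curl2 (fun y => -v y) x = -curl2 v x := by
  simp only [curl2, PiLp.neg_apply, pd_neg]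
  ring

theorem curl2_add (hv : DifferentiableAt ℝ v x) (hw : DifferentiableAt ℝ w x) :
    curl2 (fun y => v y + w y) x = curl2 v x + curl2 w x := by
  have hv' := differentiableAt_euclidean.1 hv
  have hw' := differentiableAt_euclidean.1 hw
  simp only [curl2, PiLp.add_apply, pd_add (hv' _) (hw' _)]
  ring

theorem curl2_perp (v : V2 → V2) (x : V2) : curl2 (perp v) x = divg v x := by
  change pd 0 (fun y => v y 0) x - pd 1 (fun y => -v y 1) x = _
  rw [pd_neg, sub_neg_eq_add, divg]

theorem curl2_smul_grad (hf : DifferentiableAt ℝ f x) (hg : ContDiff ℝ 2 g) :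
    curl2 (fun y => f y • grad g y) x = adv (perp (grad f)) g x := by
  change pd 0 (fun y => f y * pd 1 g y) x - pd 1 (fun y => f y * pd 0 g y) x = _
  rw [pd_mul hf (differentiable_pd hg 1 x), pd_mul hf (differentiable_pd hg 0 x),
    pd_comm hg.contDiffAt 0 1, adv_perp_grad]
  ring

theorem curl2_lapV (hv : ContDiff ℝ 3 v) (x : V2) : curl2 (lapV v) x = lap (curl2 v) x := by
  have hv' := contDiff_euclidean.1 hv
  change pd 0 (lap fun y => v y 1) x - pd 1 (lap fun y => v y 0) x = _
  rw [pd_lap (hv' 1), pd_lap (hv' 0)]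
  exact (lap_sub (contDiff_pd (hv' 1) two_add_one_eq_three.le 0)
    (contDiff_pd (hv' 0) two_add_one_eq_three.le 1) x).symm

theorem curl2_advV (hw : DifferentiableAt ℝ w x) (hv : ContDiff ℝ 2 v) :
    curl2 (advV w v) x = adv w (curl2 v) x +
      ∑ k, (pd 0 (fun y => w y k) x * pd k (fun y => v y 1) x -
        pd 1 (fun y => w y k) x * pd k (fun y => v y 0) x) := by
  have hv' := contDiff_euclidean.1 hv
  have hw' := differentiableAt_euclidean.1 hw
  have hpd (i j : Fin 2) : DifferentiableAt ℝ (pd i fun y => v y j) x :=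
    differentiable_pd (hv' j) i x
  have hpd_curl (i : Fin 2) : pd i (curl2 v) x =
      pd i (pd 0 fun y => v y 1) x - pd i (pd 1 fun y => v y 0) x :=
    pd_sub (hpd 0 1) (hpd 1 0) i
  have hpd_adv (i j : Fin 2) : pd i (adv w fun y => v y j) x =
      (w x 0 * pd i (pd 0 fun y => v y j) x + pd 0 (fun y => v y j) x * pd i (fun y => w y 0) x) +
      (w x 1 * pd i (pd 1 fun y => v y j) x +
        pd 1 (fun y => v y j) x * pd i (fun y => w y 1) x) := by
    rw [← pd_mul (hw' 0) (hpd 0 j), ← pd_mul (hw' 1) (hpd 1 j)]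
    exact pd_add ((hw' 0).mul (hpd 0 j)) ((hw' 1).mul (hpd 1 j)) i
  change pd 0 (adv w fun y => v y 1) x - pd 1 (adv w fun y => v y 0) x = _
  simp only [hpd_adv, adv, hpd_curl, Fin.sum_univ_two, pd_comm (hv' _).contDiffAt 1 0]
  ring

theorem curl2_advV_self (hu : ContDiff ℝ 2 u) (x : V2) :
    curl2 (advV u u) x = adv u (curl2 u) x + curl2 u x * divg u x := by
  rw [curl2_advV (hu.differentiable two_ne_zero x) hu]
  simp only [Fin.sum_univ_two, curl2, divg]
  ring

theorem curl2_advV_grad_perp (hα : ContDiff ℝ 2 α) (hu : ContDiff ℝ 2 u) (x : V2) :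
    curl2 (advV (grad α) (perp u)) x =
      Bop u α x + pd 1 (pd 1 α) x * divg u x + adv (grad α) (divg u) x := by
  have hpd_perp (i : Fin 2) : pd i (fun y => perp u y 0) x = -pd i (fun y => u y 1) x :=
    pd_neg _ i x
  have hperp : (fun y => perp u y 1) = fun y => u y 0 := rfl
  rw [curl2_advV (differentiable_grad hα x) (contDiff_perp hu), funext (curl2_perp u)]
  simp only [Fin.sum_univ_two, hpd_perp, hperp, grad, Bop, divg, pd_comm hα.contDiffAt 1 0]
  ring

theorem differentiable_oddForce (hα : ContDiff ℝ 2 α) (hu : ContDiff ℝ 3 u) :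
    Differentiable ℝ (oddForce α u) :=
  (differentiable_lapV (contDiff_perp hu)).add
    (differentiable_advV (contDiff_grad hα) (contDiff_perp (hu.of_le (by norm_num))))

theorem curl2_oddForce (hα : ContDiff ℝ 2 α) (hu : ContDiff ℝ 3 u)
    (hdiv : ∀ y, divg u y = 0) (x : V2) : curl2 (oddForce α u) x = Bop u α x := by
  have hu₂ : ContDiff ℝ 2 u := hu.of_le (by norm_num)
  have hlap : DifferentiableAt ℝ (lapV (perp u)) x := differentiable_lapV (contDiff_perp hu) x
  have hadv : DifferentiableAt ℝ (advV (grad α) (perp u)) x :=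
    differentiable_advV (contDiff_grad hα) (contDiff_perp hu₂) x
  calc curl2 (oddForce α u) x
      = curl2 (lapV (perp u)) x + curl2 (advV (grad α) (perp u)) x := curl2_add hlap hadv
    _ = lap (divg u) x +
          (Bop u α x + pd 1 (pd 1 α) x * divg u x + adv (grad α) (divg u) x) := by
        rw [curl2_lapV (contDiff_perp hu), funext (curl2_perp u), curl2_advV_grad_perp hα hu₂]
    _ = Bop u α x := by
        simp [show divg u = fun _ => 0 from funext hdiv, lap, adv, pd_const]

end VectorCalculus

section ConservativeForm

variable {r : V2 → ℝ} {v : V2 → V2} {x : V2}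

theorem momTensorDiv_eq (hr : DifferentiableAt ℝ r x) (hv : DifferentiableAt ℝ v x) (j : Fin 2) :
    momTensorDiv r v j x =
      v x j * (pd 0 (fun y => r y * v y 0) x + pd 1 (fun y => r y * v y 1) x) +
        r x * adv v (fun y => v y j) x := by
  have hv' := differentiableAt_euclidean.1 hv
  simp only [momTensorDiv, adv, pd_mul (hr.fun_mul (hv' _)) (hv' j)]
  ring

theorem oddTermDiv_eq (hr : DifferentiableAt ℝ r x) (hv : ContDiff ℝ 2 v) (j : Fin 2) :
    oddTermDiv r v j x = r x * lap (perpC v j) x + adv (grad r) (perpC v j) x := by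
  have hperp : ContDiff ℝ 2 (perpC v j) := contDiff_euclidean.1 (contDiff_perp hv) j
  simp only [oddTermDiv, lap, adv, grad, pd_mul hr (differentiable_pd hperp _ x)]
  ring

end ConservativeForm

section OddViscosity

variable {S : Set ℝ} {ρ : ℝ → V2 → ℝ} {u : ℝ → V2 → V2} {π : ℝ → V2 → ℝ} {t : ℝ}

theorem deriv_curl2 (hu : ContDiff ℝ 2 fun p : ℝ × V2 => u p.1 p.2) (t : ℝ) (x : V2) :
    deriv (fun s => curl2 (u s) x) t = curl2 (fun y => deriv (fun s => u s y) t) x := by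
  have hslice (y : V2) : DifferentiableAt ℝ (fun s => u s y) t :=
    (hu.comp (contDiff_prodMk_left y)).differentiable two_ne_zero t
  have hpd (i j : Fin 2) : HasDerivAt (fun s => pd i (fun y => u s y j) x)
      (pd i (fun y => deriv (fun s => u s y j) t) x) t :=
    hasDerivAt_fderiv_apply (contDiff_euclidean.1 hu j) t x _
  simp only [curl2, deriv_euclideanSpace_apply (hslice _)]
  exact ((hpd 0 1).sub (hpd 1 0)).deriv

namespace IsOVSolution

theorem velocity_equation (hsol : IsOVSolution S ρ u π) (ht : t ∈ S)
    (hρ : Differentiable ℝ fun p : ℝ × V2 => ρ p.1 p.2)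
    (hu : ContDiff ℝ 2 fun p : ℝ × V2 => u p.1 p.2) {x : V2} (hx : ρ t x ≠ 0) :
    deriv (fun s => u s x) t =
      -(advV (u t) (u t) x + (ρ t x)⁻¹ • grad (π t) x +
        oddForce (fun y => Real.log (ρ t y)) (u t) x) := by
  have hρt : DifferentiableAt ℝ (ρ t) x := hρ.comp (by fun_prop : Differentiable ℝ (t, ·)) x
  have hρx : DifferentiableAt ℝ (fun s => ρ s x) t :=
    hρ.comp (by fun_prop : Differentiable ℝ (·, x)) t
  have hut : ContDiff ℝ 2 (u t) := hu.comp (contDiff_prodMk_right t)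
  have hux : DifferentiableAt ℝ (fun s => u s x) t :=
    (hu.comp (contDiff_prodMk_left x)).differentiable two_ne_zero t
  ext j
  have hmom := hsol.momentum t ht x j
  rw [deriv_fun_mul hρx (differentiableAt_euclidean.1 hux j),
    momTensorDiv_eq hρt (hut.differentiable two_ne_zero x), oddTermDiv_eq hρt hut] at hmom
  rw [deriv_euclideanSpace_apply hux]
  change _ = -(adv (u t) (fun y => u t y j) x + (ρ t x)⁻¹ * pd j (π t) x +
    (lap (perpC (u t) j) x + adv (grad fun y => Real.log (ρ t y)) (perpC (u t) j) x))
  rw [adv_grad_comp (Real.differentiableAt_log hx) hρt, Real.deriv_log]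
  field_simp
  linear_combination hmom - u t x j * hsol.mass t ht x

theorem vorticity_equation (hsol : IsOVSolution S ρ u π) (ht : t ∈ S)
    (hρ : ContDiff ℝ 2 fun p : ℝ × V2 => ρ p.1 p.2)
    (hu : ContDiff ℝ 3 fun p : ℝ × V2 => u p.1 p.2) (hπ : ContDiff ℝ 2 (π t))
    (hne : ∀ x, ρ t x ≠ 0) (x : V2) :
    deriv (fun s => curl2 (u s) x) t + adv (u t) (curl2 (u t)) x +
      adv (perp (grad fun y => (ρ t y)⁻¹)) (π t) x +
      Bop (u t) (fun y => Real.log (ρ t y)) x = 0 := by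
  have hu₂ : ContDiff ℝ 2 fun p : ℝ × V2 => u p.1 p.2 := hu.of_le (by norm_num)
  have hρt : ContDiff ℝ 2 (ρ t) := hρ.comp (contDiff_prodMk_right t)
  have hut : ContDiff ℝ 3 (u t) := hu.comp (contDiff_prodMk_right t)
  have hut₂ : ContDiff ℝ 2 (u t) := hut.of_le (by norm_num)
  have hlog : ContDiff ℝ 2 fun y => Real.log (ρ t y) := hρt.log hne
  have hinv : DifferentiableAt ℝ (fun y => (ρ t y)⁻¹) x :=
    (hρt.inv hne).differentiable two_ne_zero x
  have hconv : DifferentiableAt ℝ (advV (u t) (u t)) x :=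
    differentiable_advV (hut.of_le (by norm_num)) hut₂ x
  have hpress : DifferentiableAt ℝ (fun y => (ρ t y)⁻¹ • grad (π t) y) x :=
    hinv.smul (differentiable_grad hπ x)
  have hodd := differentiable_oddForce hlog hut x
  have haccel := funext fun y =>
    hsol.velocity_equation ht (hρ.differentiable two_ne_zero) hu₂ (hne y)
  rw [deriv_curl2 hu₂, haccel, curl2_neg, curl2_add (hconv.fun_add hpress) hodd,
    curl2_add hconv hpress, curl2_advV_self hut₂, hsol.incomp t ht x,
    curl2_smul_grad hinv hπ, curl2_oddForce hlog hut (hsol.incomp t ht)]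
  ring

end IsOVSolution

theorem vorticity_equations_general (hρ : ContDiff ℝ 2 fun p : ℝ × V2 => ρ p.1 p.2)
    (hu : ContDiff ℝ 3 fun p : ℝ × V2 => u p.1 p.2) (hsol : IsOVSolution S ρ u π)
    (ht : t ∈ S) (hπ : ContDiff ℝ 2 (π t)) (hpos : ∀ x, 0 < ρ t x) (x : V2) :
    (deriv (fun s => curl2 (u s) x) t + adv (u t) (curl2 (u t)) x +
        adv (perp (grad fun y => (ρ t y)⁻¹)) (π t) x +
        Bop (u t) (fun y => Real.log (ρ t y)) x = 0) ∧
      adv (perp (grad fun y => (ρ t y)⁻¹)) (ρ t) x = 0 ∧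
      (deriv (fun s => curl2 (u s) x) t +
          adv (fun y => u t y - perp (grad fun z => Real.log (ρ t z)) y) (curl2 (u t)) x =
        -adv (perp (grad fun y => (ρ t y)⁻¹)) (fun y => π t y - ρ t y * curl2 (u t) y) x -
          Bop (u t) (fun y => Real.log (ρ t y)) x) ∧
      divg (fun y => u t y - perp (grad fun z => Real.log (ρ t z)) y) x = 0 := by
  have hne (y : V2) : ρ t y ≠ 0 := (hpos y).ne'
  have hρt : ContDiff ℝ 2 (ρ t) := hρ.comp (contDiff_prodMk_right t)
  have hut : ContDiff ℝ 3 (u t) := hu.comp (contDiff_prodMk_right t)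
  have hlog : ContDiff ℝ 2 fun y => Real.log (ρ t y) := hρt.log hne
  have hρx : DifferentiableAt ℝ (ρ t) x := hρt.differentiable two_ne_zero x
  have hω : DifferentiableAt ℝ (curl2 (u t)) x := differentiable_curl2 (hut.of_le (by norm_num)) x
  have hvort := hsol.vorticity_equation ht hρ hu hπ hne x
  refine ⟨hvort, ?_, ?_, ?_⟩
  · exact adv_perp_grad_inv_self hρx (hne x)
  · have hπx : DifferentiableAt ℝ (π t) x := hπ.differentiable two_ne_zero x
    rw [adv_sub_left, adv_perp_grad_inv_sub_mul hρx hπx hω (hne x)]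
    linear_combination hvort
  · have hperp : DifferentiableAt ℝ (perp (grad fun z => Real.log (ρ t z))) x :=
      (contDiff_perp (contDiff_grad hlog)).differentiable one_ne_zero x
    rw [divg_sub (hut.differentiable three_ne_zero x) hperp, hsol.incomp t ht,
      divg_perp_grad hlog.contDiffAt, sub_zero]

end OddViscosity

/-- Equations for the vorticity `ω = ∂₁u₂ - ∂₂u₁`, the cancellation
`∇^⊥(1/ρ)·∇ρ = 0`, the transport form of the vorticity equation, and the fact that
`u - ∇^⊥ log ρ` is divergence-free. -/
theorem vorticity_equations
    (T : ℝ) (hT : 0 < T) (ρ : ℝ → V2 → ℝ) (u : ℝ → V2 → V2) (π : ℝ → V2 → ℝ)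
    (hsmρ : SmoothFn ρ) (hsmu : SmoothFnV u) (hsmπ : SmoothFn π)
    (hsol : IsOVSolution (Icc 0 T) ρ u π)
    (ρstar : ℝ) (hρstar : 0 < ρstar)
    (hρlow : ∀ t ∈ Icc 0 T, ∀ x : V2, ρstar ≤ ρ t x) :
    ∀ t ∈ Icc 0 T, ∀ x : V2,
      (deriv (fun s => curl2 (u s) x) t +
          (u t x 0 * pd 0 (curl2 (u t)) x + u t x 1 * pd 1 (curl2 (u t)) x) +
          (-(pd 1 (fun y => (ρ t y)⁻¹) x) * pd 0 (π t) x +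
            pd 0 (fun y => (ρ t y)⁻¹) x * pd 1 (π t) x) +
          Bop (u t) (fun y => Real.log (ρ t y)) x = 0) ∧
      (-(pd 1 (fun y => (ρ t y)⁻¹) x) * pd 0 (ρ t) x +
          pd 0 (fun y => (ρ t y)⁻¹) x * pd 1 (ρ t) x = 0) ∧
      (deriv (fun s => curl2 (u s) x) t +
          ((u t x 0 + pd 1 (fun y => Real.log (ρ t y)) x) * pd 0 (curl2 (u t)) x +
            (u t x 1 - pd 0 (fun y => Real.log (ρ t y)) x) * pd 1 (curl2 (u t)) x) =
        -(-(pd 1 (fun y => (ρ t y)⁻¹) x) *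
              pd 0 (fun y => π t y - ρ t y * curl2 (u t) y) x +
            pd 0 (fun y => (ρ t y)⁻¹) x *
              pd 1 (fun y => π t y - ρ t y * curl2 (u t) y) x) -
          Bop (u t) (fun y => Real.log (ρ t y)) x) ∧
      divg (fun y => WithLp.toLp 2 fun i => if i = 0 then u t y 0 + pd 1 (fun z => Real.log (ρ t z)) y
        else u t y 1 - pd 0 (fun z => Real.log (ρ t z)) y) x = 0 := by
  intro t ht x
  have hπ : ContDiff ℝ 2 (π t) := (contDiff_infty.1 hsmπ 2).comp (contDiff_prodMk_right t)
  have h := vorticity_equations_general (contDiff_infty.1 hsmρ 2) (contDiff_infty.1 hsmu 3) hsol ht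
    hπ (fun y => hρstar.trans_le (hρlow t ht y)) x
  rwa [sub_perp_grad_eq] at h
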